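/- There are infinitely many triples of positive integers a, b, c, each greater than 1, such that ab+1, ac+1, bc+1, and abc+1 are all perfect squares. -/

import Mathlib

/-!
The triples are regular, `c = a + b + 2r` with `ab + 1 = r²`, so that `ac + 1 = (a + r)²` and
`bc + 1 = (b + r)²` are automatic and only `abc + 1` has to be arranged. This happens along the
solutions of the Pell-type equation `n² - 3j² = 13`: with `a = j² + 4`, `k = (n + j - 1) / 2` and
`r = ka - n`, one has `b = k²a - 2kn + 3`, and `abc + 1` is the square of
`n + 8j + 2j²n + 6j³ + j⁴n/2 + j⁵`. Solutions with `j = 2p` even and `n = 2q + 1` odd are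
used, for which the equation reads `q² + q = 3p² + 3`; multiplication by the unit `7 + 4√3`
gives infinitely many of them (`pell_unbounded`), starting from `(p, q) = (1, 2)`. The first
triple is `(8, 45, 91)`.
-/

/-- The equation `q² + q = 3p² + 3`, that is `(2q + 1)² - 3(2p)² = 13`, has solutions with `p`
arbitrarily large. -/
theorem pell_unbounded (N : ℕ) :
    ∃ p q : ℤ, (N : ℤ) < p ∧ 0 < q ∧ q ^ 2 + q = 3 * p ^ 2 + 3 := by
  induction N with
  | zero => exact ⟨1, 2, by norm_num⟩
  | succ N ih =>
    obtain ⟨p, q, hp, hq, h⟩ := ih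
    -- `(2q + 1) + 2p√3` is multiplied by `7 + 4√3`.
    refine ⟨7 * p + 4 * q + 2, 12 * p + 7 * q + 3, ?_, ?_, ?_⟩
    · push_cast
      linarith
    · linarith
    · linear_combination h

theorem exists_triple (N : ℕ) : ∃ a b c : ℕ, N < a ∧ 1 < a ∧ 1 < b ∧ 1 < c ∧
    IsSquare (a * b + 1) ∧ IsSquare (a * c + 1) ∧
    IsSquare (b * c + 1) ∧ IsSquare (a * b * c + 1) := by
  obtain ⟨p, q, hp, hq, h⟩ := pell_unbounded N
  have hp1 : 1 ≤ p := by linarith [Int.natCast_nonneg N]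
  obtain ⟨n, hn⟩ : ∃ n, n = 2 * q + 1 := ⟨_, rfl⟩
  obtain ⟨k, hk⟩ : ∃ k, k = q + p := ⟨_, rfl⟩
  obtain ⟨a, ha⟩ : ∃ a, a = 4 * p ^ 2 + 4 := ⟨_, rfl⟩
  obtain ⟨r, hr⟩ : ∃ r, r = k * a - n := ⟨_, rfl⟩
  obtain ⟨b, hb⟩ : ∃ b, b = k ^ 2 * a - 2 * k * n + 3 := ⟨_, rfl⟩
  obtain ⟨c, hc⟩ : ∃ c, c = a + b + 2 * r := ⟨_, rfl⟩
  have ha8 : 8 ≤ a := by nlinarith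
  have haN : (N : ℤ) < a := by nlinarith
  have hk0 : 0 < k := by linarith
  have hka : 2 * n ≤ k * a := by nlinarith
  have hb1 : 1 < b := by nlinarith
  have hc1 : 1 < c := by linarith
  have hab : a * b + 1 = r * r := by
    subst hb hr hn ha
    linear_combination (-4) * h
  have hac : a * c + 1 = (a + r) * (a + r) := by
    subst hc
    linear_combination hab
  have hbc : b * c + 1 = (b + r) * (b + r) := by
    subst hc
    linear_combination hab
  have habc : ∃ s, a * b * c + 1 = s * s := by
    refine ⟨n + 16 * p + 8 * p ^ 2 * n + 48 * p ^ 3 + 8 * p ^ 4 * n + 32 * p ^ 5, ?_⟩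
    have e : a * b * c + 1 = (r * r - 1) * c + 1 := by
      rw [← hab]
      ring
    rw [e]
    subst hc hb hr hn hk ha
    grind
  lift a to ℕ using by linarith
  lift b to ℕ using by linarith
  lift c to ℕ using by linarith
  refine ⟨a, b, c, by exact_mod_cast haN, by linarith, by exact_mod_cast hb1,
    by exact_mod_cast hc1, ?_, ?_, ?_, ?_⟩ <;> rw [← Int.isSquare_natCast_iff] <;> push_cast
  exacts [⟨_, hab⟩, ⟨_, hac⟩, ⟨_, hbc⟩, habc]

theorem infinitely_many_triples :
    {t : ℕ × ℕ × ℕ | 1 < t.1 ∧ 1 < t.2.1 ∧ 1 < t.2.2 ∧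
      IsSquare (t.1 * t.2.1 + 1) ∧ IsSquare (t.1 * t.2.2 + 1) ∧
      IsSquare (t.2.1 * t.2.2 + 1) ∧ IsSquare (t.1 * t.2.1 * t.2.2 + 1)}.Infinite := by
  apply Set.Infinite.of_image Prod.fst
  refine Set.infinite_of_forall_exists_gt fun N => ?_
  obtain ⟨a, b, c, hN, h⟩ := exists_triple N
  exact ⟨a, ⟨(a, b, c), h, rfl⟩, hN⟩
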